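/- Let f : D → {0,1} be a partial Boolean function with D ⊆ {0,1}^n. Then R(f ∘ OR_m) = Ω(m · R(f)) and R_0(f ∘ OR_m) = Ω(m · R_0(f)). Consequently, R(f ∘ AND_m ∘ OR_m) = Ω(m^2 · R(f)) and R_0(f ∘ AND_m ∘ OR_m) = Ω(m^2 · R_0(f)). -/

import Mathlib

open scoped BigOperators ENNReal

namespace QC

/-! ### Inputs and partial functions -/

/-- An input assigns to each index `i` a symbol from the alphabet `Fin (α i)`. -/
abbrev Input (ι : Type) (α : ι → ℕ) := ∀ i : ι, Fin (α i)

/-- A (possibly partial) Boolean-valued query function; `none` means the input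
is outside the promise/domain. -/
abbrev PartialFn (ι : Type) (α : ι → ℕ) := Input ι α → Option Bool

/-- A total function has every input in its domain. -/
def TotalFn {ι : Type} {α : ι → ℕ} (f : PartialFn ι α) : Prop := ∀ x, f x ≠ none

/-- Classical truth value of a proposition, as a `Bool`. -/
noncomputable def ofProp (P : Prop) : Bool := @decide P (Classical.propDecidable P)

/-! ### Decision trees and classical query complexity -/

/-- Decision trees over index set `ι` with alphabets `α` and leaf labels `L`. -/
inductive DTree (ι : Type) (α : ι → ℕ) (L : Type) : Type
  | leaf : L → DTree ι α L
  | node : (i : ι) → (Fin (α i) → DTree ι α L) → DTree ι α L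

namespace DTree

variable {ι : Type} {α : ι → ℕ} {L : Type}

/-- Evaluate a decision tree on an input. -/
def eval : DTree ι α L → Input ι α → L
  | leaf b, _ => b
  | node i child, x => eval (child (x i)) x

/-- The number of queries the tree makes on a given input. -/
def cost : DTree ι α L → Input ι α → ℕ
  | leaf _, _ => 0
  | node i child, x => cost (child (x i)) x + 1

/-- The depth (worst-case number of queries) of a decision tree. -/
def depth : DTree ι α L → ℕ
  | leaf _ => 0
  | node _ child => (Finset.univ.sup fun a => depth (child a)) + 1

end DTree

variable {ι : Type} {α : ι → ℕ}

/-- Deterministic query complexity `D(f)`. -/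
noncomputable def Dq (f : PartialFn ι α) : ℕ :=
  sInf {d | ∃ T : DTree ι α (Option Bool), T.depth ≤ d ∧
    ∀ x b, f x = some b → T.eval x = some b}

/-- Bounded-error randomized query complexity `R(f)` (worst-case queries,
success probability at least 2/3 on every domain input). -/
noncomputable def Rq (f : PartialFn ι α) : ℕ :=
  sInf {d | ∃ μ : PMF (DTree ι α (Option Bool)),
    (∀ T ∈ μ.support, T.depth ≤ d) ∧
    ∀ x b, f x = some b → 2/3 ≤ μ.toOuterMeasure {T | T.eval x = some b}}

/-- Zero-error randomized query complexity `R₀(f)` (worst-case queries): the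
algorithm never errs, and outputs `none` ("don't know") with probability at most 1/2. -/
noncomputable def R0q (f : PartialFn ι α) : ℕ :=
  sInf {d | ∃ μ : PMF (DTree ι α (Option Bool)),
    (∀ T ∈ μ.support, T.depth ≤ d) ∧
    (∀ T ∈ μ.support, ∀ x b, f x = some b → T.eval x = some b ∨ T.eval x = none) ∧
    ∀ x b, f x = some b → μ.toOuterMeasure {T | T.eval x = none} ≤ 1/2}

/-- Zero-error randomized query complexity, measured by the worst-case *expected*
number of queries over domain inputs (value in `ℝ≥0∞`). -/
noncomputable def R0expq (f : PartialFn ι α) : ℝ≥0∞ :=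
  sInf {c | ∃ μ : PMF (DTree ι α (Option Bool)),
    (∀ T ∈ μ.support, ∀ x b, f x = some b → T.eval x = some b ∨ T.eval x = none) ∧
    (∀ x b, f x = some b → μ.toOuterMeasure {T | T.eval x = none} ≤ 1/2) ∧
    (∀ x b, f x = some b → ∑' T, μ T * (T.cost x : ℝ≥0∞) ≤ c)}

/-- One-sided-error randomized query complexity `R₁(f)`: accept every 1-input with
probability at least 2/3, and never accept a 0-input. -/
noncomputable def R1q (f : PartialFn ι α) : ℕ :=
  sInf {d | ∃ μ : PMF (DTree ι α (Option Bool)),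
    (∀ T ∈ μ.support, T.depth ≤ d) ∧
    (∀ x, f x = some true → 2/3 ≤ μ.toOuterMeasure {T | T.eval x = some true}) ∧
    (∀ x, f x = some false → ∀ T ∈ μ.support, T.eval x ≠ some true)}

/-! ### Quantum query complexity -/

/-- The index set of the state space of a quantum query algorithm:
a query register `Σ i, Fin (α i)` together with a workspace register `Fin W`. -/
abbrev QIdx (ι : Type) (α : ι → ℕ) (W : ℕ) := (Σ i : ι, Fin (α i)) × Fin W

variable [Fintype ι] [DecidableEq ι]

/-- The standard query oracle for input `x`: the permutation matrix sending the basis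
vector `|i,a⟩|w⟩` to `|i, a + x i⟩|w⟩` (addition modulo `α i`). -/
noncomputable def oracleMatrix (W : ℕ) (x : Input ι α) :
    Matrix (QIdx ι α W) (QIdx ι α W) ℂ :=
  Matrix.of fun j j' =>
    if j.2 = j'.2 ∧ j.1 = ⟨j'.1.1, j'.1.2 + x j'.1.1⟩ then 1 else 0

/-- The product `U_T · O · U_{T-1} · O ⋯ O · U_0` of unitaries interleaved with oracle
calls, defining a `T`-query quantum algorithm. -/
noncomputable def qProd {τ : Type} [Fintype τ] (U : ℕ → Matrix τ τ ℂ) (Ox : Matrix τ τ ℂ) :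
    ℕ → Matrix τ τ ℂ
  | 0 => U 0
  | t + 1 => U (t + 1) * Ox * qProd U Ox t

/-- A quantum query algorithm: a number `T` of queries, a workspace size `W`,
unitaries `U 0, …, U T`, a unit initial state, and a measurement assigning to each
basis state an output in `Option Bool` (`none` = "don't know"). -/
structure QAlg (ι : Type) [Fintype ι] [DecidableEq ι] (α : ι → ℕ) where
  T : ℕ
  W : ℕ
  U : ℕ → Matrix (QIdx ι α W) (QIdx ι α W) ℂ
  unitary : ∀ t, U t ∈ Matrix.unitaryGroup (QIdx ι α W) ℂ
  init : QIdx ι α W → ℂ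
  init_norm : ∑ j, ‖init j‖ ^ 2 = 1
  out : QIdx ι α W → Option Bool

/-- The final state of a quantum algorithm on input `x`. -/
noncomputable def QAlg.finalState (A : QAlg ι α) (x : Input ι α) : QIdx ι α A.W → ℂ :=
  (qProd A.U (oracleMatrix A.W x) A.T).mulVec A.init

/-- The probability that the algorithm outputs `v` on input `x`. -/
noncomputable def QAlg.outProb (A : QAlg ι α) (x : Input ι α) (v : Option Bool) : ℝ :=
  ∑ j, if A.out j = v then ‖A.finalState x j‖ ^ 2 else 0

/-- Bounded-error quantum query complexity `Q(f)`. -/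
noncomputable def Qq (f : PartialFn ι α) : ℕ :=
  sInf {d | ∃ A : QAlg ι α, A.T ≤ d ∧
    ∀ x b, f x = some b → (2 : ℝ)/3 ≤ A.outProb x (some b)}

/-- Exact quantum query complexity `Q_E(f)`. -/
noncomputable def QEq (f : PartialFn ι α) : ℕ :=
  sInf {d | ∃ A : QAlg ι α, A.T ≤ d ∧
    ∀ x b, f x = some b → A.outProb x (some b) = 1}

/-- One-sided-error quantum query complexity `Q₁(f)`. -/
noncomputable def Q1q (f : PartialFn ι α) : ℕ :=
  sInf {d | ∃ A : QAlg ι α, A.T ≤ d ∧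
    (∀ x, f x = some true → (2 : ℝ)/3 ≤ A.outProb x (some true)) ∧
    (∀ x, f x = some false → A.outProb x (some true) = 0)}

/-- Zero-error quantum query complexity `Q₀(f)`: never wrong, outputs `none`
with probability at most 1/2. -/
noncomputable def Q0q (f : PartialFn ι α) : ℕ :=
  sInf {d | ∃ A : QAlg ι α, A.T ≤ d ∧
    ∀ x b, f x = some b → A.outProb x (some !b) = 0 ∧ A.outProb x none ≤ 1/2}

/-! ### Certificate complexity -/

/-- A partial assignment `ρ` is consistent with an input `x`. -/
def Consistent (ρ : ∀ i : ι, Option (Fin (α i))) (x : Input ι α) : Prop :=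
  ∀ i v, ρ i = some v → x i = v

/-- The number of fixed positions of a partial assignment. -/
noncomputable def certSize (ρ : ∀ i : ι, Option (Fin (α i))) : ℕ :=
  Nat.card {i // (ρ i).isSome}

/-- The certificate complexity of `f` at input `x`: the least size of a partial
assignment consistent with `x` forcing the value `f x` on all domain inputs. -/
noncomputable def CxAt (f : PartialFn ι α) (x : Input ι α) : ℕ :=
  sInf {s | ∃ ρ, Consistent ρ x ∧ (∀ y, Consistent ρ y → f y = none ∨ f y = f x) ∧
    certSize ρ ≤ s}

/-- Certificate complexity `C(f)`. -/
noncomputable def Cq (f : PartialFn ι α) : ℕ :=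
  sSup {s | ∃ x, f x ≠ none ∧ s = CxAt f x}

/-- One-certificate complexity `C¹(f)`. -/
noncomputable def C1q (f : PartialFn ι α) : ℕ :=
  sSup {s | ∃ x, f x = some true ∧ s = CxAt f x}

/-! ### Polynomial degree -/

/-- Exact polynomial degree `deg(f)`: least degree of a real polynomial agreeing
with `f` (as a 0/1 function of the numerical values of the input symbols) on its domain. -/
noncomputable def degq (f : PartialFn ι α) : ℕ :=
  sInf {d | ∃ p : MvPolynomial ι ℝ, p.totalDegree ≤ d ∧
    ∀ x b, f x = some b →
      MvPolynomial.eval (fun i => ((x i : ℕ) : ℝ)) p = if b then 1 else 0}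

/-- Approximate polynomial degree `adeg(f)`: least degree of a real polynomial
approximating `f` pointwise to error 1/3 on its domain. -/
noncomputable def adegq (f : PartialFn ι α) : ℕ :=
  sInf {d | ∃ p : MvPolynomial ι ℝ, p.totalDegree ≤ d ∧
    ∀ x b, f x = some b →
      |MvPolynomial.eval (fun i => ((x i : ℕ) : ℝ)) p - if b then 1 else 0| ≤ 1/3}

end QC
/-! ### Certifying functions and cheat sheets -/

namespace QC

variable {ι : Type} {α : ι → ℕ}

/-- `φ` is a certifying function for the partial function `f`: it accepts `(x, y)`
only when `x` is in the domain of `f` and the first bit of `y` equals `f x`; every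
domain input has some accepted certificate `y`; and the all-zeros `y` is never accepted. -/
def IsCertifying {k : ℕ} (hk : 0 < k) (f : PartialFn ι α)
    (φ : Input ι α → (Fin k → Fin 2) → Bool) : Prop :=
  (∀ x y, f x = none → φ x y = false) ∧
  (∀ x y b, f x = some b → y ⟨0, hk⟩ ≠ (if b then 1 else 0) → φ x y = false) ∧
  (∀ x b, f x = some b → ∃ y, φ x y = true) ∧
  (∀ x, φ x (fun _ => 0) = false)

/-- The index set of the input to a certifying function, viewed as a query function:
the original input together with `k` certificate bits. -/
abbrev CertIdx (ι : Type) (k : ℕ) := ι ⊕ Fin k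

/-- Alphabets for `CertIdx`. -/
def certAlphabet (α : ι → ℕ) (k : ℕ) : CertIdx ι k → ℕ := Sum.elim α fun _ => 2

/-- A certifying function viewed as a total query function on input ⊕ certificate bits. -/
def certFn {k : ℕ} (φ : Input ι α → (Fin k → Fin 2) → Bool) :
    PartialFn (CertIdx ι k) (certAlphabet α k) :=
  fun z => some (φ (fun i => z (Sum.inl i)) (fun q => z (Sum.inr q)))

/-- The index set of the input to the cheat sheet version of a function: `c` copies of
the original input, followed by `2^c` cells each holding `c` certificate strings of `k` bits. -/
abbrev CSIdx (ι : Type) (c k : ℕ) := (Fin c × ι) ⊕ (Fin (2 ^ c) × Fin c × Fin k)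

/-- Alphabets for `CSIdx`. -/
def csAlphabet (α : ι → ℕ) (c k : ℕ) : CSIdx ι c k → ℕ :=
  Sum.elim (fun p => α p.2) fun _ => 2

/-- The `i`-th copy of the original input inside a cheat sheet input. -/
def csX {c k : ℕ} (z : Input (CSIdx ι c k) (csAlphabet α c k)) (i : Fin c) : Input ι α :=
  fun p => z (Sum.inl (i, p))

/-- The `i`-th certificate string in the `ℓ`-th cheat sheet cell. -/
def csY {c k : ℕ} (z : Input (CSIdx ι c k) (csAlphabet α c k)) (ℓ : Fin (2 ^ c))
    (i : Fin c) : Fin k → Fin 2 :=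
  fun q => z (Sum.inr (ℓ, i, q))

/-- The number in `[2^c]` whose binary representation is the bit string `b`. -/
def binToFin (c : ℕ) (b : Fin c → Bool) : Fin (2 ^ c) :=
  ⟨(∑ i, if b i then 2 ^ (i : ℕ) else 0) % 2 ^ c, Nat.mod_lt _ (by positivity)⟩

/-- The defining condition of the cheat sheet function: all `c` copies lie in the
domain of `f`, and the cell addressed by their `f`-values holds certificates
accepted by `φ` for each copy. -/
def CSCond {c k : ℕ} (f : PartialFn ι α) (φ : Input ι α → (Fin k → Fin 2) → Bool)
    (z : Input (CSIdx ι c k) (csAlphabet α c k)) : Prop :=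
  ∃ bvec : Fin c → Bool, (∀ i, f (csX z i) = some (bvec i)) ∧
    ∀ i, φ (csX z i) (csY z (binToFin c bvec) i) = true

/-- The cheat sheet version of `f` with respect to the certifying function `φ`,
with `c` copies of `f`. It is a total function. -/
noncomputable def cheatSheet (c : ℕ) {k : ℕ} (f : PartialFn ι α)
    (φ : Input ι α → (Fin k → Fin 2) → Bool) :
    PartialFn (CSIdx ι c k) (csAlphabet α c k) :=
  fun z => some (ofProp (CSCond f φ z))

/-! ### OR / AND compositions -/

/-- The `OR` function on `m` bits (alphabet `Fin 2`). -/
def orFn (m : ℕ) (z : Fin m → Fin 2) : Fin 2 := if ∃ j, z j = 1 then 1 else 0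

/-- The `AND` function on `m` bits (alphabet `Fin 2`). -/
def andFn (m : ℕ) (z : Fin m → Fin 2) : Fin 2 := if ∀ j, z j = 1 then 1 else 0

/-- The composition `f ∘ OR_m`. -/
def composeOr {n : ℕ} (f : PartialFn (Fin n) fun _ => 2) (m : ℕ) :
    PartialFn (Fin n × Fin m) (fun _ => 2) :=
  fun z => f fun i => orFn m fun j => z (i, j)

/-- The composition `f ∘ AND_m ∘ OR_m`. -/
def composeAndOr {n : ℕ} (f : PartialFn (Fin n) fun _ => 2) (m : ℕ) :
    PartialFn (Fin n × Fin m × Fin m) (fun _ => 2) :=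
  fun z => f fun i => andFn m fun j => orFn m fun l => z (i, j, l)

/-! ### k-SUM, Block k-sum, BKK and its recursive composition -/

/-- The `k`-SUM function on `n` numbers from `[q]`: is there a set of `k` of the
input numbers summing to `0` modulo `q`? -/
noncomputable def kSUMfn (n q k : ℕ) : PartialFn (Fin n) (fun _ => q) :=
  fun x => some (ofProp (∃ S : Finset (Fin n), S.card = k ∧
    (∑ i ∈ S, (x i : ℕ)) % q = 0))

/-- Number of ones in a block of bits. -/
def onesCount {B : ℕ} (z : Fin B → Fin 2) : ℕ := (Finset.univ.filter fun j => z j = 1).card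

/-- The number encoded in binary by a block of bits. -/
def blockVal {B : ℕ} (z : Fin B → Fin 2) : ℕ := ∑ j, if z j = 1 then 2 ^ (j : ℕ) else 0

/-- A block is balanced if it has an equal number of 0s and 1s. -/
def isBalanced {B : ℕ} (z : Fin B → Fin 2) : Prop := 2 * onesCount z = B

/-- Block `k`-sum on `nb` blocks of `B` bits each: value 1 iff there are `k` balanced
blocks whose encoded numbers sum to 0 (mod `2^B`) and every other block has at least
as many 1s as 0s. -/
noncomputable def blockKSumBool (nb B k : ℕ) (z : Fin nb × Fin B → Fin 2) : Bool :=
  ofProp (∃ S : Finset (Fin nb), S.card = k ∧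
    (∀ i ∈ S, isBalanced fun j => z (i, j)) ∧
    (∑ i ∈ S, blockVal fun j => z (i, j)) % 2 ^ B = 0 ∧
    ∀ i ∉ S, B ≤ 2 * onesCount fun j => z (i, j))

/-- The Boolean version of `k`-SUM on `m` numbers of `w` bits each (mod `2^w`). -/
noncomputable def kSumBool (m w k : ℕ) (z : Fin m × Fin w → Fin 2) : Bool :=
  ofProp (∃ S : Finset (Fin m), S.card = k ∧
    (∑ i ∈ S, blockVal fun j => z (i, j)) % 2 ^ w = 0)

/-- Block size of the outer Block `k`-sum in `BKK` on (roughly) `n` outer bits. -/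
def bkkB (n k : ℕ) : ℕ := 10 * k * Nat.log 2 n
/-- Number of blocks of the outer Block `k`-sum in `BKK`. -/
def bkkNB (n k : ℕ) : ℕ := n / bkkB n k
/-- Bits per number of the inner Boolean `k`-SUM in `BKK`. -/
def bkkW (n k : ℕ) : ℕ := k * Nat.log 2 n
/-- Number of numbers of the inner Boolean `k`-SUM in `BKK`. -/
def bkkM (n k : ℕ) : ℕ := n / bkkW n k

/-- The index set of the inputs of `BKK_{n²,k}` (one inner `k`-SUM input bit for
each outer Block `k`-sum input bit; roughly `n²` bits in total). -/
abbrev BKKIdx (n k : ℕ) := (Fin (bkkNB n k) × Fin (bkkB n k)) × (Fin (bkkM n k) × Fin (bkkW n k))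

/-- `BKK_{n²,k}`: Block `k`-sum composed with the Boolean version of `k`-SUM. -/
noncomputable def bkkBool (n k : ℕ) (z : BKKIdx n k → Fin 2) : Bool :=
  blockKSumBool (bkkNB n k) (bkkB n k) k fun ob =>
    if kSumBool (bkkM n k) (bkkW n k) k (fun p => z (ob, p)) then 1 else 0

/-- `BKK_{n²,k}` as a total query function. -/
noncomputable def BKKfn (n k : ℕ) : PartialFn (BKKIdx n k) (fun _ => 2) :=
  fun z => some (bkkBool n k z)

/-- The `d`-fold self-composition of a total Boolean function `g`: a depth-`d` tree
each of whose internal nodes is a copy of `g`; input bits are indexed by root-to-leaf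
paths `Fin d → I`. -/
noncomputable def iterFn {I : Type} (g : (I → Fin 2) → Bool) :
    (d : ℕ) → ((Fin d → I) → Fin 2) → Bool
  | 0, z => decide (z (fun i => i.elim0) = 1)
  | d + 1, z => g fun a => if iterFn g d (fun v => z (Fin.cons a v)) then 1 else 0

/-- The recursion depth used for `RecBKK`: `d = (4/25)·log n / log log n`. -/
def recD (n : ℕ) : ℕ := 4 * Nat.log 2 n / (25 * Nat.log 2 (Nat.log 2 n))

/-- The index set of the inputs of `RecBKK`. -/
abbrev RecIdx (n : ℕ) := Fin (recD n) → BKKIdx n (Nat.log 2 n)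

/-- `RecBKK`: the `recD n`-fold self-composition of `BKK` with `k = log n`. -/
noncomputable def RecBKKfn (n : ℕ) : PartialFn (RecIdx n) (fun _ => 2) :=
  fun z => some (iterFn (bkkBool n (Nat.log 2 n)) (recD n) z)

/-- The nominal input size `N = n^{2d}` of `RecBKK`. -/
def recN (n : ℕ) : ℕ := n ^ (2 * recD n)

end QC

/-!
Hide each bit `x i` at a uniformly random position of a block of `m` bits and fill the rest of the
block with zeros: the `OR` of the block is `x i`, and an algorithm has to find the position before
it learns anything about `x i`. If it spends `c` queries on the block, its chance of success is
`O(c / m)`. Hence `d` queries to the hidden input amount to only `O(d / m)` queries to `x` on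
average, and cutting the algorithm off at a constant multiple of this average costs, by Markov's
inequality, a small constant probability of failure. A vote among three runs restores the required
success probability. Filling the blocks with ones instead handles `AND`, and `AND_m ∘ OR_m` is
treated by hiding twice.
-/

namespace QC

theorem consistent_none {ι : Type} {α : ι → ℕ} (x : Input ι α) :
    Consistent (fun _ => none) x := by
  simp [Consistent]

theorem Consistent.update {ι : Type} {α : ι → ℕ} [DecidableEq ι]
    {ρ : ∀ i, Option (Fin (α i))} {x : Input ι α} (hρ : Consistent ρ x) (i : ι) :
    Consistent (Function.update ρ i (some (x i))) x := by
  intro k v hv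
  obtain rfl | hki := eq_or_ne k i
  · simpa using hv
  · exact hρ k v (by rwa [Function.update_of_ne hki] at hv)

namespace DTree

section Operations

variable {ι : Type} {α : ι → ℕ} {L M : Type}

/-- The indices queried by a tree on an input, in order and with repetitions. -/
def path : DTree ι α L → Input ι α → List ι
  | leaf _, _ => []
  | node i c, x => i :: path (c (x i)) x

theorem length_path_le_depth (T : DTree ι α L) (x : Input ι α) : (T.path x).length ≤ T.depth := by
  induction T with
  | leaf l => exact le_rfl
  | node i c ih =>
    exact Nat.succ_le_succ <|
      (ih (x i)).trans (Finset.le_sup (f := fun a => (c a).depth) (Finset.mem_univ _))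

theorem exists_eval_eq_of_dependsOn [Nonempty L] {s : Finset ι} {F : Input ι α → L}
    (hF : DependsOn F s) : ∃ T : DTree ι α L, ∀ x, T.eval x = F x := by
  classical
  induction s using Finset.induction_on generalizing F with
  | empty =>
    rw [Finset.coe_empty] at hF
    obtain hα | ⟨⟨y⟩⟩ := isEmpty_or_nonempty (Input ι α)
    · exact ⟨leaf (Classical.arbitrary L), isEmptyElim⟩
    · exact ⟨leaf (F y), hF.empty y⟩
  | insert i s hi ih =>
    choose T hT using fun a => ih (by simpa only [Finset.erase_insert hi] using hF.update i a)
    exact ⟨node i T, fun x => by rw [eval, hT, Function.update_eq_self]⟩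

theorem exists_eval_eq [Finite ι] [Nonempty L] (F : Input ι α → L) :
    ∃ T : DTree ι α L, ∀ x, T.eval x = F x := by
  have := Fintype.ofFinite ι
  exact exists_eval_eq_of_dependsOn (s := Finset.univ)
    (by simpa only [Finset.coe_univ] using dependsOn_univ F)

/-- Cut a tree off after `t` queries, answering `l` on the paths that are cut. -/
def trunc (l : L) : DTree ι α L → ℕ → DTree ι α L
  | leaf a, _ => leaf a
  | node _ _, 0 => leaf l
  | node i c, t + 1 => node i fun a => trunc l (c a) t

theorem depth_trunc_le (l : L) (T : DTree ι α L) (t : ℕ) : (trunc l T t).depth ≤ t := by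
  fun_induction trunc l T t with
  | case1 => exact Nat.zero_le _
  | case2 => exact le_rfl
  | case3 _ _ _ ih => exact Nat.succ_le_succ (Finset.sup_le fun a _ => ih a)

theorem eval_trunc_of_cost_le (l : L) (T : DTree ι α L) (t : ℕ) (x : Input ι α)
    (h : T.cost x ≤ t) : (trunc l T t).eval x = T.eval x := by
  fun_induction trunc l T t with
  | case1 => rfl
  | case2 => exact absurd h (Nat.not_succ_le_zero _)
  | case3 i _ _ ih => exact ih (x i) (Nat.le_of_succ_le_succ h)

theorem eval_trunc_eq_or (l : L) (T : DTree ι α L) (t : ℕ) (x : Input ι α) :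
    (trunc l T t).eval x = T.eval x ∨ (trunc l T t).eval x = l := by
  fun_induction trunc l T t with
  | case1 => exact Or.inl rfl
  | case2 => exact Or.inr rfl
  | case3 i _ _ ih => exact ih (x i)

/-- Sequential composition: run a tree, then the tree chosen by its output. -/
def andThen : DTree ι α L → (L → DTree ι α M) → DTree ι α M
  | leaf l, F => F l
  | node i c, F => node i fun a => andThen (c a) F

theorem eval_andThen (T : DTree ι α L) (F : L → DTree ι α M) (x : Input ι α) :
    (T.andThen F).eval x = (F (T.eval x)).eval x := by
  induction T with
  | leaf l => rfl
  | node i _ ih => exact ih (x i)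

theorem depth_andThen_le (T : DTree ι α L) {F : L → DTree ι α M} {t : ℕ}
    (hF : ∀ l, (F l).depth ≤ t) : (T.andThen F).depth ≤ T.depth + t := by
  induction T with
  | leaf l => exact (hF l).trans (Nat.le_add_left _ _)
  | node i c ih =>
    rw [andThen, depth, depth, add_right_comm]
    refine Nat.succ_le_succ (Finset.sup_le fun a _ => (ih a).trans ?_)
    gcongr
    exact Finset.le_sup (f := fun a => (c a).depth) (Finset.mem_univ a)

end Operations

section Dedup

variable {ι : Type} {α : ι → ℕ} {L : Type} [DecidableEq ι]

/-- Answer the queries whose result is recorded in `ρ`, or was already obtained, without asking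
them again. -/
def dedup : DTree ι α L → (∀ i, Option (Fin (α i))) → DTree ι α L
  | leaf l, _ => leaf l
  | node i c, ρ =>
    match ρ i with
    | some a => dedup (c a) ρ
    | none => node i fun a => dedup (c a) (Function.update ρ i (some a))

theorem eval_dedup (T : DTree ι α L) {ρ : ∀ i, Option (Fin (α i))} {x : Input ι α}
    (hρ : Consistent ρ x) : (T.dedup ρ).eval x = T.eval x := by
  induction T generalizing ρ with
  | leaf l => rfl
  | node i c ih =>
    rw [dedup, eval]
    split
    next a ha => rw [ih a hρ, hρ i a ha]
    next => rw [eval, ih (x i) (hρ.update i)]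

theorem cost_dedup (T : DTree ι α L) {ρ : ∀ i, Option (Fin (α i))} {x : Input ι α}
    (hρ : Consistent ρ x) :
    (T.dedup ρ).cost x = ((T.path x).toFinset.filter fun i => ρ i = none).card := by
  induction T generalizing ρ with
  | leaf l => rfl
  | node i c ih =>
    rw [dedup, path, List.toFinset_cons, Finset.filter_insert]
    split
    next a ha => rw [ih a hρ, hρ i a ha, if_neg (by simp [ha])]
    next hi =>
      rw [cost, ih (x i) (hρ.update i), if_pos hi, ← Finset.card_erase_add_one
        (Finset.mem_insert_self i _), Finset.erase_insert_eq_erase]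
      congr 2
      ext k
      obtain rfl | hki := eq_or_ne k i <;> simp [*]

end Dedup

end DTree

/-- One round of searching for a position hidden in `A`: asking for `p` finds the position if it is
`p`, and otherwise costs one query and eliminates `p`. `P` says that the search succeeds. -/
theorem card_mul_card_filter_le_of_erase {β : Type*} [DecidableEq β] {A : Finset β} {p : β}
    {P : β → Prop} [DecidablePred P] {cost cost' : β → ℕ} (hp : 1 ≤ cost p)
    (hcost : ∀ a ∈ A.erase p, cost a = cost' a + 1)
    (h : (A.erase p).card * ((A.erase p).filter P).card ≤ 2 * ∑ a ∈ A.erase p, cost' a) :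
    A.card * (A.filter P).card ≤ 2 * ∑ a ∈ A, cost a := by
  have hsum : ∑ a ∈ A.erase p, cost a = ∑ a ∈ A.erase p, cost' a + (A.erase p).card := by
    rw [Finset.sum_congr rfl hcost, Finset.sum_add_distrib, Finset.card_eq_sum_ones]
  have hle := Finset.card_filter_le (A.erase p) P
  by_cases hpA : p ∈ A
  · have hfilter : (A.filter P).card ≤ ((A.erase p).filter P).card + 1 := by
      rw [Finset.filter_erase]
      exact Nat.sub_le_iff_le_add.1 Finset.pred_card_le_card_erase
    rw [← Finset.add_sum_erase A cost hpA, hsum, ← Finset.card_erase_add_one hpA]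
    nlinarith
  · rw [Finset.erase_eq_of_notMem hpA] at h hsum
    omega

theorem sum_sum_update {ι β M : Type*} [DecidableEq ι] [Fintype ι] [Fintype β] [AddCommMonoid M]
    (F : (ι → β) → M) (i : ι) :
    ∑ j, ∑ a, F (Function.update j i a) = Fintype.card β • ∑ j, F j := by
  have hswap : Function.Involutive fun q : (ι → β) × β => (Function.update q.1 i q.2, q.1 i) :=
    fun q => by simp
  calc ∑ j, ∑ a, F (Function.update j i a)
      = ∑ q : (ι → β) × β, F (Function.update q.1 i q.2) :=
        (Fintype.sum_prod_type fun q : (ι → β) × β => F (Function.update q.1 i q.2)).symm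
    _ = ∑ q : (ι → β) × β, F q.1 := hswap.bijective.sum_comp fun q => F q.1
    _ = ∑ j, ∑ _a : β, F j := Fintype.sum_prod_type fun q : (ι → β) × β => F q.1
    _ = Fintype.card β • ∑ j, F j := by
      simp only [Finset.sum_const, Finset.card_univ, Finset.smul_sum]

section Planting

variable {ι κ β : Type} {α : ι → ℕ} [DecidableEq β] (pos : κ → ι × β)
  (b : Input κ fun k => α (pos k).1)

/-- The input `x` hidden in the background `b`: index `k` is position `(pos k).2` of the block
`(pos k).1`, and block `i` shows the symbol `x i` at position `j i` only. -/
def plant (j : ι → β) (x : Input ι α) : Input κ fun k => α (pos k).1 :=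
  fun k => if (pos k).2 = j (pos k).1 then x (pos k).1 else b k

theorem plant_of_ne {j : ι → β} {k : κ} (h : (pos k).2 ≠ j (pos k).1) (x : Input ι α) :
    plant pos b j x k = b k :=
  if_neg h

theorem plant_update_of_ne [DecidableEq ι] {i : ι} {k : κ} (h : (pos k).1 ≠ i) (j : ι → β) (a : β)
    (x : Input ι α) : plant pos b (Function.update j i a) x k = plant pos b j x k := by
  simp only [plant, Function.update_of_ne h]

namespace DTree

variable {L : Type}

/-- Simulate a tree on the planted input `plant pos b j x` by queries to `x`. -/
def unplant (j : ι → β) : DTree κ (fun k => α (pos k).1) L → DTree ι α L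
  | leaf l => leaf l
  | node k c =>
    if (pos k).2 = j (pos k).1 then node (pos k).1 fun a => unplant j (c a) else unplant j (c (b k))

/-- The blocks and positions that a tree queries on the planted input, in order. -/
def probes (T : DTree κ (fun k => α (pos k).1) L) (j : ι → β) (x : Input ι α) : List (ι × β) :=
  (T.path (plant pos b j x)).map pos

theorem probes_node (k : κ) (c : Fin (α (pos k).1) → DTree κ (fun k => α (pos k).1) L) (j : ι → β)
    (x : Input ι α) :
    (node k c).probes pos b j x = pos k :: (c (plant pos b j x k)).probes pos b j x :=
  rfl

theorem eval_unplant (T : DTree κ (fun k => α (pos k).1) L) (j : ι → β) (x : Input ι α) :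
    (T.unplant pos b j).eval x = T.eval (plant pos b j x) := by
  induction T with
  | leaf l => rfl
  | node k c ih => by_cases h : (pos k).2 = j (pos k).1 <;> simp [unplant, eval, plant, h, ih]

theorem mem_path_unplant {T : DTree κ (fun k => α (pos k).1) L} {j : ι → β} {x : Input ι α}
    {i : ι} : i ∈ (T.unplant pos b j).path x ↔ (i, j i) ∈ T.probes pos b j x := by
  induction T with
  | leaf l => simp [unplant, probes, path]
  | node k c ih =>
    rw [probes_node, List.mem_cons, unplant, plant]
    split_ifs with h
    · rw [path, List.mem_cons, ih]
      grind
    · rw [ih]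
      grind

variable [DecidableEq ι]

theorem eval_dedup_unplant (T : DTree κ (fun k => α (pos k).1) L) (j : ι → β) (x : Input ι α) :
    ((T.unplant pos b j).dedup fun _ => none).eval x = T.eval (plant pos b j x) := by
  rw [eval_dedup _ (consistent_none x), eval_unplant]

theorem card_mul_card_hit_le (T : DTree κ (fun k => α (pos k).1) L) (j : ι → β) (i : ι)
    (x : Input ι α) (A : Finset β) :
    A.card * (A.filter fun a => (i, a) ∈ T.probes pos b (Function.update j i a) x).card ≤
      2 * ∑ a ∈ A, ((T.probes pos b (Function.update j i a) x).map Prod.fst).count i := by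
  induction T generalizing A with
  | leaf l => simp [probes, path]
  | node k c ih =>
    by_cases hk : (pos k).1 = i
    · have hprobes (a : β) (ha : a ∈ A.erase (pos k).2) :
          (node k c).probes pos b (Function.update j i a) x =
            pos k :: (c (b k)).probes pos b (Function.update j i a) x := by
        rw [probes_node, plant_of_ne]
        simpa [hk] using (Finset.ne_of_mem_erase ha).symm
      refine card_mul_card_filter_le_of_erase (p := (pos k).2)
        (cost' := fun a =>
          (((c (b k)).probes pos b (Function.update j i a) x).map Prod.fst).count i)
        ?_ (fun a ha => ?_) ((ih (b k) (A.erase (pos k).2)).trans' (le_of_eq ?_))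
      · simp [probes_node, hk]
      · simp [hprobes a ha, hk]
      · congr 2
        refine Finset.filter_congr fun a ha => ?_
        have hne : (i, a) ≠ pos k := fun h => Finset.ne_of_mem_erase ha (congrArg Prod.snd h)
        rw [hprobes a ha, List.mem_cons, or_iff_right hne]
    · have hne (a : β) : (i, a) ≠ pos k := fun h => hk (congrArg Prod.fst h).symm
      simp only [probes_node, plant_update_of_ne pos b hk, List.mem_cons, hne, false_or,
        List.map_cons, List.count_cons_of_ne hk]
      exact ih _ A

theorem sum_count_fst_probes [Fintype ι] (T : DTree κ (fun k => α (pos k).1) L) (j : ι → β)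
    (x : Input ι α) :
    ∑ i, ((T.probes pos b j x).map Prod.fst).count i = (T.path (plant pos b j x)).length := by
  simpa [probes] using Multiset.sum_count_eq_card (s := Finset.univ)
    (m := (↑((T.probes pos b j x).map Prod.fst) : Multiset ι)) (by simp)

variable [Fintype ι] [Fintype β] [Nonempty β]

theorem card_mul_sum_hit_le (T : DTree κ (fun k => α (pos k).1) L) (i : ι) (x : Input ι α) :
    Fintype.card β * ∑ j, (if (i, j i) ∈ T.probes pos b j x then 1 else 0) ≤
      2 * ∑ j, ((T.probes pos b j x).map Prod.fst).count i := by
  refine Nat.le_of_mul_le_mul_left ?_ (Fintype.card_pos (α := β))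
  calc Fintype.card β * (Fintype.card β * ∑ j, if (i, j i) ∈ T.probes pos b j x then 1 else 0)
      = ∑ j : ι → β, Fintype.card β *
          (Finset.univ.filter fun a => (i, a) ∈ T.probes pos b (Function.update j i a) x).card := by
        rw [← smul_eq_mul (Fintype.card β) (∑ j, _), ← sum_sum_update _ i, Finset.mul_sum]
        simp only [Function.update_self, Finset.card_filter]
    _ ≤ ∑ j : ι → β,
          2 * ∑ a, ((T.probes pos b (Function.update j i a) x).map Prod.fst).count i :=
        Finset.sum_le_sum fun j _ => card_mul_card_hit_le pos b T j i x Finset.univ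
    _ = Fintype.card β * (2 * ∑ j, ((T.probes pos b j x).map Prod.fst).count i) := by
        rw [← Finset.mul_sum, sum_sum_update fun j => ((T.probes pos b j x).map Prod.fst).count i,
          smul_eq_mul, mul_left_comm]

theorem card_mul_sum_card_path_unplant_le (T : DTree κ (fun k => α (pos k).1) L) (x : Input ι α) :
    Fintype.card β * ∑ j : ι → β, ((T.unplant pos b j).path x).toFinset.card ≤
      2 * (Fintype.card (ι → β) * T.depth) := by
  calc Fintype.card β * ∑ j : ι → β, ((T.unplant pos b j).path x).toFinset.card
      = ∑ i, Fintype.card β * ∑ j : ι → β, (if (i, j i) ∈ T.probes pos b j x then 1 else 0) := by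
        rw [← Finset.mul_sum, Finset.sum_comm]
        congr! with j
        rw [← Finset.card_filter]
        congr! with i
        ext i
        simp [mem_path_unplant]
    _ ≤ ∑ i, 2 * ∑ j, ((T.probes pos b j x).map Prod.fst).count i :=
        Finset.sum_le_sum fun i _ => card_mul_sum_hit_le pos b T i x
    _ = 2 * ∑ j, (T.path (plant pos b j x)).length := by
        rw [← Finset.mul_sum, Finset.sum_comm]
        simp only [sum_count_fst_probes]
    _ ≤ 2 * (Fintype.card (ι → β) * T.depth) := by
        gcongr
        exact Finset.sum_le_card_nsmul _ _ _ fun j _ => T.length_path_le_depth _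

theorem mul_card_lt_card_path_unplant_le (T : DTree κ (fun k => α (pos k).1) L) (x : Input ι α)
    {d : ℕ} (hd : T.depth ≤ d) :
    24 * (Finset.univ.filter fun j : ι → β =>
      48 * d / Fintype.card β < ((T.unplant pos b j).path x).toFinset.card).card ≤
        Fintype.card (ι → β) := by
  set t := 48 * d / Fintype.card β
  set N := Fintype.card (ι → β)
  set Long := Finset.univ.filter fun j : ι → β => t < ((T.unplant pos b j).path x).toFinset.card
  have hmarkov : Long.card * (t + 1) ≤ ∑ j : ι → β, ((T.unplant pos b j).path x).toFinset.card :=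
    (Finset.card_nsmul_le_sum Long _ (t + 1) fun j hj => (Finset.mem_filter.1 hj).2).trans
      (Finset.sum_le_sum_of_subset (Finset.subset_univ _))
  have ht : 48 * d < Fintype.card β * (t + 1) := Nat.lt_mul_div_succ _ Fintype.card_pos
  have hmul : Long.card * (48 * d + 1) ≤ 2 * (N * d) :=
    calc Long.card * (48 * d + 1) ≤ Long.card * (Fintype.card β * (t + 1)) := by gcongr; omega
      _ = Fintype.card β * (Long.card * (t + 1)) := by ring
      _ ≤ 2 * (N * T.depth) :=
        (Nat.mul_le_mul_left _ hmarkov).trans (card_mul_sum_card_path_unplant_le pos b T x)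
      _ ≤ 2 * (N * d) := by gcongr
  by_contra! hN
  nlinarith

end DTree

end Planting
section Probability

variable {A B C : Type*}

theorem toOuterMeasure_add_compl (μ : PMF A) (G : Set A) :
    μ.toOuterMeasure G + μ.toOuterMeasure Gᶜ = 1 := by
  rw [PMF.toOuterMeasure_apply, PMF.toOuterMeasure_apply, ← ENNReal.tsum_add, ← μ.tsum_coe]
  exact tsum_congr fun a => congrFun (G.indicator_self_add_compl μ) a

theorem toOuterMeasure_le_one (μ : PMF A) (G : Set A) : μ.toOuterMeasure G ≤ 1 :=
  le_self_add.trans_eq (toOuterMeasure_add_compl μ G)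

theorem le_toOuterMeasure_iff_compl_le {μ : PMF A} {G : Set A} {p q : ℝ≥0∞} (h : p + q = 1) :
    p ≤ μ.toOuterMeasure G ↔ μ.toOuterMeasure Gᶜ ≤ q := by
  have hμ := toOuterMeasure_add_compl μ G
  have hp : p ≠ ∞ := ne_top_of_le_ne_top ENNReal.one_ne_top (h ▸ le_self_add)
  have hG : μ.toOuterMeasure Gᶜ ≠ ∞ := ne_top_of_le_ne_top ENNReal.one_ne_top (hμ ▸ le_add_self)
  rw [← ENNReal.add_le_add_iff_right hG, hμ, ← h, ENNReal.add_le_add_iff_left hp]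

theorem toOuterMeasure_bind_le (μ : PMF A) {F : A → PMF B} {G : Set A} {S : Set B} {u v : ℝ≥0∞}
    (hu : ∀ a ∈ μ.support, a ∈ G → (F a).toOuterMeasure S ≤ u)
    (hv : ∀ a ∈ μ.support, a ∉ G → (F a).toOuterMeasure S ≤ v) :
    (μ.bind F).toOuterMeasure S ≤ μ.toOuterMeasure G * u + μ.toOuterMeasure Gᶜ * v := by
  rw [PMF.toOuterMeasure_bind_apply, PMF.toOuterMeasure_apply, PMF.toOuterMeasure_apply,
    ← ENNReal.tsum_mul_right, ← ENNReal.tsum_mul_right, ← ENNReal.tsum_add]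
  refine ENNReal.tsum_le_tsum fun a => ?_
  by_cases ha : a ∈ μ.support
  · by_cases haG : a ∈ G
    · simpa [haG] using mul_le_mul_right (hu a ha haG) (μ a)
    · simpa [haG] using mul_le_mul_right (hv a ha haG) (μ a)
  · simp [(μ.apply_eq_zero_iff a).2 ha]

theorem toOuterMeasure_bind_le_of_forall (μ : PMF A) {F : A → PMF B} {S : Set B} {p : ℝ≥0∞}
    (h : ∀ a ∈ μ.support, (F a).toOuterMeasure S ≤ p) : (μ.bind F).toOuterMeasure S ≤ p := by
  have hle := toOuterMeasure_bind_le μ (G := ∅) (fun a ha _ => h a ha) fun a ha _ => h a ha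
  rwa [← add_mul, toOuterMeasure_add_compl, one_mul] at hle

theorem toOuterMeasure_map_le (μ : PMF A) {φ : A → B} {G : Set A} {S : Set B}
    (h : ∀ a ∉ G, φ a ∉ S) : (μ.map φ).toOuterMeasure S ≤ μ.toOuterMeasure G := by
  rw [PMF.toOuterMeasure_map_apply]
  exact MeasureTheory.measure_mono fun a ha => by_contra fun haG => h a haG ha

theorem toOuterMeasure_bind_map_le_mul (μ : PMF A) (ν : PMF B) {φ : A → B → C} {G : Set A}
    {H : Set B} {S : Set C} (h : ∀ a b, φ a b ∈ S → a ∈ G ∧ b ∈ H) :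
    (μ.bind fun a => ν.map (φ a)).toOuterMeasure S ≤ μ.toOuterMeasure G * ν.toOuterMeasure H := by
  have hempty (a) (ha : a ∉ G) : (ν.map (φ a)).toOuterMeasure S ≤ ν.toOuterMeasure ∅ :=
    toOuterMeasure_map_le ν fun b _ hb => ha (h a b hb).1
  simpa using toOuterMeasure_bind_le μ
    (fun a _ _ => toOuterMeasure_map_le ν fun b hb hS => hb (h a b hS).2)
    fun a _ ha => hempty a ha

theorem toOuterMeasure_bind_map_le_add (μ : PMF A) (ν : PMF B) {φ : A → B → C} {S : Set C}
    {P Q : A → B → Prop} {p q : ℝ≥0∞} (hS : ∀ a b, φ a b ∈ S → P a b ∨ Q a b)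
    (hP : ∀ b, μ.toOuterMeasure {a | P a b} ≤ p)
    (hQ : ∀ a ∈ μ.support, ν.toOuterMeasure {b | Q a b} ≤ q) :
    (μ.bind fun a => ν.map (φ a)).toOuterMeasure S ≤ p + q := by
  set π : PMF (A × B) := μ.bind fun a => ν.map (Prod.mk a) with hπ
  have hπ_swap : π = ν.bind fun b => μ.map fun a => (a, b) := μ.bind_comm ν _
  have hmap : (μ.bind fun a => ν.map (φ a)) = π.map fun z => φ z.1 z.2 := by
    simp only [hπ, PMF.map_bind, PMF.map_comp, Function.comp_def]
  calc (μ.bind fun a => ν.map (φ a)).toOuterMeasure S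
      ≤ π.toOuterMeasure ({z | P z.1 z.2} ∪ {z | Q z.1 z.2}) := by
        rw [hmap, PMF.toOuterMeasure_map_apply]
        exact MeasureTheory.measure_mono fun z hz => hS z.1 z.2 hz
    _ ≤ π.toOuterMeasure {z | P z.1 z.2} + π.toOuterMeasure {z | Q z.1 z.2} :=
        MeasureTheory.measure_union_le _ _
    _ ≤ p + q := by
        gcongr
        · rw [hπ_swap]
          refine toOuterMeasure_bind_le_of_forall ν fun b _ => ?_
          rw [PMF.toOuterMeasure_map_apply]
          exact hP b
        · refine toOuterMeasure_bind_le_of_forall μ fun a ha => ?_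
          rw [PMF.toOuterMeasure_map_apply]
          exact hQ a ha

theorem toOuterMeasure_bind_bind_map_le (ν : PMF A) {φ : A → A → A → B} {G : Set A} {S : Set B}
    (h₁₂ : ∀ a ∈ G, ∀ b ∈ G, ∀ c, φ a b c ∉ S) (h₁₃ : ∀ a ∈ G, ∀ b, ∀ c ∈ G, φ a b c ∉ S)
    (h₂₃ : ∀ a, ∀ b ∈ G, ∀ c ∈ G, φ a b c ∉ S) :
    (ν.bind fun a => ν.bind fun b => ν.map (φ a b)).toOuterMeasure S ≤
      ν.toOuterMeasure Gᶜ ^ 2 * (1 + 2 * ν.toOuterMeasure G) := by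
  set q := ν.toOuterMeasure Gᶜ
  have hgood (a) (ha : a ∈ G) : (ν.bind fun b => ν.map (φ a b)).toOuterMeasure S ≤ q * q :=
    toOuterMeasure_bind_map_le_mul ν ν fun b c hS =>
      ⟨fun hb => h₁₂ a ha b hb c hS, fun hc => h₁₃ a ha b c hc hS⟩
  have hbad (a) : (ν.bind fun b => ν.map (φ a b)).toOuterMeasure S ≤
      ν.toOuterMeasure G * q + q * 1 :=
    toOuterMeasure_bind_le ν
      (fun b _ hb => toOuterMeasure_map_le ν fun c hc => h₂₃ a b hb c (not_not.1 hc))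
      fun b _ _ => toOuterMeasure_le_one _ _
  calc (ν.bind fun a => ν.bind fun b => ν.map (φ a b)).toOuterMeasure S
      ≤ ν.toOuterMeasure G * (q * q) + q * (ν.toOuterMeasure G * q + q * 1) :=
        toOuterMeasure_bind_le ν (fun a _ ha => hgood a ha) fun a _ _ => hbad a
    _ = q ^ 2 * (1 + 2 * ν.toOuterMeasure G) := by ring

theorem sq_mul_one_add_two_mul_le {p q : ℝ≥0∞} (hpq : p + q = 1) (hq : q ≤ 1 / 3 + 1 / 24) :
    q ^ 2 * (1 + 2 * p) ≤ 1 / 3 := by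
  lift p to NNReal using ne_top_of_le_ne_top ENNReal.one_ne_top (hpq ▸ le_self_add)
  lift q to NNReal using ne_top_of_le_ne_top ENNReal.one_ne_top (hpq ▸ le_add_self)
  have hpq' : p + q = 1 := by exact_mod_cast hpq
  have hq' : q ≤ 1 / 3 + 1 / 24 := by
    rw [← ENNReal.coe_le_coe]
    simpa using hq
  suffices h : q ^ 2 * (1 + 2 * p) ≤ 1 / 3 by simpa using ENNReal.coe_le_coe.2 h
  rw [← NNReal.coe_le_coe] at hq' ⊢
  rw [← NNReal.coe_inj] at hpq'
  push_cast at hpq' hq' ⊢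
  rw [show (p : ℝ) = 1 - q by linarith]
  have hmul : (q : ℝ) * (1 + 2 * (1 - q)) ≤ 27 / 32 := by nlinarith
  nlinarith [q.coe_nonneg]

end Probability

section Simulation

variable {ι κ β L : Type} {α : ι → ℕ} [Fintype ι] [DecidableEq ι] [Fintype β] [DecidableEq β]
  [Nonempty β] (pos : κ → ι × β) (b : Input κ fun k => α (pos k).1)

theorem toOuterMeasure_lt_card_path_unplant_le (T : DTree κ (fun k => α (pos k).1) L)
    (x : Input ι α) {d : ℕ} (hd : T.depth ≤ d) :
    (PMF.uniformOfFintype (ι → β)).toOuterMeasure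
      {j | 48 * d / Fintype.card β < ((T.unplant pos b j).path x).toFinset.card} ≤ 1 / 24 := by
  classical
  rw [PMF.toOuterMeasure_uniformOfFintype_apply, Fintype.card_subtype,
    ENNReal.div_le_iff (by simp) (by finiteness), one_div, ← ENNReal.div_eq_inv_mul,
    ENNReal.le_div_iff_mul_le (by simp) (by simp), mul_comm]
  exact_mod_cast DTree.mul_card_lt_card_path_unplant_le pos b T x hd

/-- Plant the input at uniformly random positions, run a random tree drawn from `μ` without
repeating queries, and answer `none` as soon as `t` queries do not suffice. -/
noncomputable def simulate (t : ℕ) (μ : PMF (DTree κ (fun k => α (pos k).1) (Option L))) :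
    PMF (DTree ι α (Option L)) :=
  μ.bind fun T => (PMF.uniformOfFintype (ι → β)).map fun j =>
    ((T.unplant pos b j).dedup fun _ => none).trunc none t

variable {pos b} {t : ℕ} {μ : PMF (DTree κ (fun k => α (pos k).1) (Option L))}
  {T : DTree ι α (Option L)}

theorem depth_le_of_mem_support_simulate (hT : T ∈ (simulate pos b t μ).support) :
    T.depth ≤ t := by
  simp only [simulate, PMF.mem_support_bind_iff, PMF.mem_support_map_iff] at hT
  obtain ⟨S, -, j, -, rfl⟩ := hT
  exact DTree.depth_trunc_le _ _ _

theorem exists_eval_eq_or_of_mem_support_simulate (hT : T ∈ (simulate pos b t μ).support) :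
    ∃ S ∈ μ.support, ∃ j, ∀ x, T.eval x = S.eval (plant pos b j x) ∨ T.eval x = none := by
  simp only [simulate, PMF.mem_support_bind_iff, PMF.mem_support_map_iff] at hT
  obtain ⟨S, hS, j, -, rfl⟩ := hT
  exact ⟨S, hS, j, fun x => DTree.eval_dedup_unplant pos b S j x ▸ DTree.eval_trunc_eq_or _ _ _ _⟩

theorem toOuterMeasure_simulate_le {d : ℕ} (hd : ∀ T ∈ μ.support, T.depth ≤ d) {x : Input ι α}
    {V : Set (Option L)} {p : ℝ≥0∞}
    (hp : ∀ j, μ.toOuterMeasure {S | S.eval (plant pos b j x) ∈ V} ≤ p) :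
    (simulate pos b (48 * d / Fintype.card β) μ).toOuterMeasure {T | T.eval x ∈ V} ≤
      p + 1 / 24 := by
  refine toOuterMeasure_bind_map_le_add μ _ (fun S j hSj => or_iff_not_imp_right.2 fun hlen => ?_)
    hp fun S hS => toOuterMeasure_lt_card_path_unplant_le pos b S x (hd S hS)
  rwa [Set.mem_ofPred_eq, DTree.eval_trunc_of_cost_le _ _ _ _ ?_, DTree.eval_dedup_unplant] at hSj
  rw [DTree.cost_dedup _ (consistent_none x), Finset.filter_true_of_mem fun _ _ => rfl]
  exact not_lt.1 hlen

end Simulation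

section Amplification

variable {ι L : Type} {α : ι → ℕ} [DecidableEq L]

/-- The value on which two of three answers agree, if there is one; `none` means "don't know".
The first answer only breaks ties between the other two. -/
def vote (a b c : Option L) : Option L :=
  if a = c then c.or b else b.or c

/-- Run three trees and combine their outputs by `vote`. -/
def voteTree (T₁ T₂ T₃ : DTree ι α (Option L)) : DTree ι α (Option L) :=
  T₁.andThen fun a => T₂.andThen fun b => T₃.andThen fun c => .leaf (vote a b c)

theorem eval_voteTree (T₁ T₂ T₃ : DTree ι α (Option L)) (x : Input ι α) :
    (voteTree T₁ T₂ T₃).eval x = vote (T₁.eval x) (T₂.eval x) (T₃.eval x) := by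
  simp only [voteTree, DTree.eval_andThen, DTree.eval]

theorem depth_voteTree_le (T₁ T₂ T₃ : DTree ι α (Option L)) :
    (voteTree T₁ T₂ T₃).depth ≤ T₁.depth + (T₂.depth + T₃.depth) :=
  DTree.depth_andThen_le _ fun _ => DTree.depth_andThen_le _ fun _ =>
    DTree.depth_andThen_le (t := 0) _ fun _ => le_rfl

theorem vote_eq_none {a b c : Option L} : vote a b c = none ↔ b = none ∧ c = none := by
  unfold vote
  split_ifs <;> simp [and_comm]

theorem vote_eq_or (a b c : Option L) : vote a b c = b ∨ vote a b c = c := by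
  unfold vote
  split_ifs <;> cases b <;> cases c <;> simp

theorem vote_eq_some {a b c : Option L} {v : L}
    (h : a = some v ∧ b = some v ∨ a = some v ∧ c = some v ∨ b = some v ∧ c = some v) :
    vote a b c = some v := by
  unfold vote
  grind

/-- Combine three independent runs of a random tree by `vote`. -/
noncomputable def amplify (ν : PMF (DTree ι α (Option L))) : PMF (DTree ι α (Option L)) :=
  ν.bind fun T₁ => ν.bind fun T₂ => ν.map (voteTree T₁ T₂)

variable {ν : PMF (DTree ι α (Option L))}

theorem mem_support_amplify {T : DTree ι α (Option L)} :
    T ∈ (amplify ν).support ↔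
      ∃ T₁ ∈ ν.support, ∃ T₂ ∈ ν.support, ∃ T₃ ∈ ν.support, voteTree T₁ T₂ T₃ = T := by
  simp only [amplify, PMF.mem_support_bind_iff, PMF.mem_support_map_iff]

theorem depth_le_of_mem_support_amplify {t : ℕ} (ht : ∀ T ∈ ν.support, T.depth ≤ t)
    {T : DTree ι α (Option L)} (hT : T ∈ (amplify ν).support) : T.depth ≤ 3 * t := by
  obtain ⟨T₁, h₁, T₂, h₂, T₃, h₃, rfl⟩ := mem_support_amplify.1 hT
  linarith [depth_voteTree_le T₁ T₂ T₃, ht T₁ h₁, ht T₂ h₂, ht T₃ h₃]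

theorem eval_mem_of_mem_support_amplify {x : Input ι α} {V : Set (Option L)}
    (hV : ∀ T ∈ ν.support, T.eval x ∈ V) {T : DTree ι α (Option L)}
    (hT : T ∈ (amplify ν).support) : T.eval x ∈ V := by
  obtain ⟨T₁, -, T₂, h₂, T₃, h₃, rfl⟩ := mem_support_amplify.1 hT
  rw [eval_voteTree]
  obtain h | h := vote_eq_or (T₁.eval x) (T₂.eval x) (T₃.eval x) <;> rw [h]
  exacts [hV T₂ h₂, hV T₃ h₃]

theorem toOuterMeasure_amplify_ne_some_le {x : Input ι α} {v : L}
    (h : ν.toOuterMeasure {T | T.eval x = some v}ᶜ ≤ 1 / 3 + 1 / 24) :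
    (amplify ν).toOuterMeasure {T | T.eval x = some v}ᶜ ≤ 1 / 3 := by
  set G : Set (DTree ι α (Option L)) := {T | T.eval x = some v}
  have hvote {T₁ T₂ T₃} (h : T₁ ∈ G ∧ T₂ ∈ G ∨ T₁ ∈ G ∧ T₃ ∈ G ∨ T₂ ∈ G ∧ T₃ ∈ G) :
      voteTree T₁ T₂ T₃ ∉ Gᶜ :=
    not_not.2 ((eval_voteTree T₁ T₂ T₃ x).trans (vote_eq_some h))
  calc (amplify ν).toOuterMeasure Gᶜ
      ≤ ν.toOuterMeasure Gᶜ ^ 2 * (1 + 2 * ν.toOuterMeasure G) :=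
        toOuterMeasure_bind_bind_map_le ν (fun _ h₁ _ h₂ _ => hvote (.inl ⟨h₁, h₂⟩))
          (fun _ h₁ _ _ h₃ => hvote (.inr (.inl ⟨h₁, h₃⟩)))
          fun _ _ h₂ _ h₃ => hvote (.inr (.inr ⟨h₂, h₃⟩))
    _ ≤ 1 / 3 := sq_mul_one_add_two_mul_le (toOuterMeasure_add_compl ν G) h

theorem toOuterMeasure_amplify_eq_none_le {x : Input ι α}
    (h : ν.toOuterMeasure {T | T.eval x = none} ≤ 1 / 2 + 1 / 24) :
    (amplify ν).toOuterMeasure {T | T.eval x = none} ≤ 1 / 2 := by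
  have hsq : (amplify ν).toOuterMeasure {T | T.eval x = none} ≤
      ν.toOuterMeasure {T | T.eval x = none} * ν.toOuterMeasure {T | T.eval x = none} :=
    toOuterMeasure_bind_le_of_forall ν fun T₁ _ =>
      toOuterMeasure_bind_map_le_mul ν ν fun T₂ T₃ h₁₂₃ =>
        vote_eq_none.1 ((eval_voteTree T₁ T₂ T₃ x).symm.trans h₁₂₃)
  calc (amplify ν).toOuterMeasure {T | T.eval x = none}
      ≤ (1 / 2 + 1 / 24) * (1 / 2 + 1 / 24) := hsq.trans (mul_le_mul' h h)
    _ ≤ 1 / 2 := by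
      suffices h : (1 / 2 + 1 / 24) * (1 / 2 + 1 / 24) ≤ (1 / 2 : NNReal) by
        simpa using ENNReal.coe_le_coe.2 h
      rw [← NNReal.coe_le_coe]
      push_cast
      norm_num

end Amplification

section Complexity

variable {ι κ : Type} {α : ι → ℕ}

/-- The random tree `μ` computes `f` with bounded error, as in the definition of `Rq`. -/
def BoundedErr (f : PartialFn ι α) (μ : PMF (DTree ι α (Option Bool))) : Prop :=
  ∀ x b, f x = some b → 2 / 3 ≤ μ.toOuterMeasure {T | T.eval x = some b}

/-- The random tree `μ` computes `f` with zero error, as in the definition of `R0q`. -/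
def ZeroErr (f : PartialFn ι α) (μ : PMF (DTree ι α (Option Bool))) : Prop :=
  (∀ T ∈ μ.support, ∀ x b, f x = some b → T.eval x = some b ∨ T.eval x = none) ∧
    ∀ x b, f x = some b → μ.toOuterMeasure {T | T.eval x = none} ≤ 1 / 2

theorem boundedErr_iff {f : PartialFn ι α} {μ : PMF (DTree ι α (Option Bool))} :
    BoundedErr f μ ↔
      ∀ x b, f x = some b → μ.toOuterMeasure {T | T.eval x = some b}ᶜ ≤ 1 / 3 := by
  have hsum : (2 / 3 + 1 / 3 : ℝ≥0∞) = 1 := by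
    rw [ENNReal.div_add_div_same, two_add_one_eq_three,
      ENNReal.div_self three_ne_zero ENNReal.ofNat_ne_top]
  simp only [BoundedErr, le_toOuterMeasure_iff_compl_le hsum]

theorem exists_boundedErr [Finite ι] (f : PartialFn ι α) :
    ∃ μ, (∀ T ∈ μ.support, T.depth ≤ Rq f) ∧ BoundedErr f μ := by
  refine Nat.sInf_mem (s := {d | ∃ μ, (∀ T ∈ μ.support, DTree.depth T ≤ d) ∧ BoundedErr f μ}) ?_
  obtain ⟨T, hT⟩ := DTree.exists_eval_eq f
  refine ⟨T.depth, PMF.pure T, by simp, boundedErr_iff.2 fun x b hb => ?_⟩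
  simp [hT, hb]

theorem exists_zeroErr [Finite ι] (f : PartialFn ι α) :
    ∃ μ, (∀ T ∈ μ.support, T.depth ≤ R0q f) ∧ ZeroErr f μ := by
  refine Nat.sInf_mem (s := {d | ∃ μ, (∀ T ∈ μ.support, DTree.depth T ≤ d) ∧ ZeroErr f μ}) ?_
  obtain ⟨T, hT⟩ := DTree.exists_eval_eq f
  refine ⟨T.depth, PMF.pure T, by simp, ?_, fun x b hb => ?_⟩
  · simp +contextual [hT]
  · simp [hT, hb]

variable {β : Type} [Finite ι] [Finite κ] [Fintype β] [DecidableEq β] {pos : κ → ι × β}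
  {b : Input κ fun k => α (pos k).1} {f : PartialFn ι α} {g : PartialFn κ fun k => α (pos k).1}

theorem card_mul_Rq_le (h : ∀ j x, g (plant pos b j x) = f x) :
    Fintype.card β * Rq f ≤ 144 * Rq g := by
  classical
  have := Fintype.ofFinite ι
  obtain hβ | hβ := isEmpty_or_nonempty β
  · simp
  obtain ⟨μ, hd, hμ⟩ := exists_boundedErr g
  have hle : Rq f ≤ 3 * (48 * Rq g / Fintype.card β) := by
    refine Nat.sInf_le ⟨amplify (simulate pos b _ μ), fun T =>
      depth_le_of_mem_support_amplify fun S => depth_le_of_mem_support_simulate,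
      boundedErr_iff.2 fun x v hv => toOuterMeasure_amplify_ne_some_le ?_⟩
    exact toOuterMeasure_simulate_le hd (V := {some v}ᶜ) fun j =>
      boundedErr_iff.1 hμ _ v ((h j x).trans hv)
  linarith [Nat.mul_le_mul_left (Fintype.card β) hle,
    Nat.mul_div_le (48 * Rq g) (Fintype.card β)]

theorem card_mul_R0q_le (h : ∀ j x, g (plant pos b j x) = f x) :
    Fintype.card β * R0q f ≤ 144 * R0q g := by
  classical
  have := Fintype.ofFinite ι
  obtain hβ | hβ := isEmpty_or_nonempty β
  · simp
  obtain ⟨μ, hd, hzero, hnone⟩ := exists_zeroErr g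
  have hle : R0q f ≤ 3 * (48 * R0q g / Fintype.card β) := by
    refine Nat.sInf_le ⟨amplify (simulate pos b _ μ), fun T =>
      depth_le_of_mem_support_amplify fun S => depth_le_of_mem_support_simulate,
      fun T hT x v hv => ?_, fun x v hv => toOuterMeasure_amplify_eq_none_le ?_⟩
    · refine eval_mem_of_mem_support_amplify (V := {a | a = some v ∨ a = none}) (fun S hS => ?_) hT
      obtain ⟨S', hS', j, hj⟩ := exists_eval_eq_or_of_mem_support_simulate hS
      exact (hj x).elim (fun hx => hx ▸ hzero S' hS' _ v ((h j x).trans hv)) Or.inr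
    · exact toOuterMeasure_simulate_le hd (V := {none}) fun j => hnone _ v ((h j x).trans hv)
  nlinarith [Nat.mul_div_le (48 * R0q g) (Fintype.card β)]

end Complexity

section OrAnd

theorem orFn_single {m : ℕ} (j : Fin m) (v : Fin 2) :
    orFn m (fun k => if k = j then v else 0) = v := by
  unfold orFn
  fin_cases v <;> simp

theorem andFn_single {m : ℕ} (j : Fin m) (v : Fin 2) :
    andFn m (fun k => if k = j then v else 1) = v := by
  unfold andFn
  fin_cases v <;> simp

/-- The composition `f ∘ AND_m`, the intermediate function between `f` and `f ∘ AND_m ∘ OR_m`. -/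
def composeAnd {n : ℕ} (f : PartialFn (Fin n) fun _ => 2) (m : ℕ) :
    PartialFn (Fin n × Fin m) (fun _ => 2) :=
  fun z => f fun i => andFn m fun j => z (i, j)

variable {n m : ℕ} (f : PartialFn (Fin n) fun _ => 2)

theorem composeOr_plant (j : Fin n → Fin m) (x : Input (Fin n) fun _ => 2) :
    composeOr f m (plant (α := fun _ => 2) id (fun _ => 0) j x) = f x := by
  simp only [composeOr, plant, id, orFn_single]

theorem composeAnd_plant (j : Fin n → Fin m) (x : Input (Fin n) fun _ => 2) :
    composeAnd f m (plant (α := fun _ => 2) id (fun _ => 1) j x) = f x := by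
  simp only [composeAnd, plant, id, andFn_single]

theorem composeAndOr_plant (j : Fin n × Fin m → Fin m) (x : Input (Fin n × Fin m) fun _ => 2) :
    composeAndOr f m (plant (α := fun _ => 2) (fun k => ((k.1, k.2.1), k.2.2)) (fun _ => 0) j x) =
      composeAnd f m x := by
  simp only [composeAndOr, composeAnd, plant, orFn_single]

end OrAnd

end QC

/-- Randomized query complexity composes with `OR_m` (and with
`AND_m ∘ OR_m`): `R(f ∘ OR_m) = Ω(m·R(f))`, `R₀(f ∘ OR_m) = Ω(m·R₀(f))`,
`R(f ∘ AND_m ∘ OR_m) = Ω(m²·R(f))`, `R₀(f ∘ AND_m ∘ OR_m) = Ω(m²·R₀(f))`,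
with absolute hidden constants. -/
theorem randomized_composition_with_or :
    ∃ c : ℝ, 0 < c ∧ ∀ (n m : ℕ) (f : QC.PartialFn (Fin n) fun _ => 2),
      c * ((m : ℝ) * (QC.Rq f : ℝ)) ≤ (QC.Rq (QC.composeOr f m) : ℝ) ∧
      c * ((m : ℝ) * (QC.R0q f : ℝ)) ≤ (QC.R0q (QC.composeOr f m) : ℝ) ∧
      c * ((m : ℝ) ^ 2 * (QC.Rq f : ℝ)) ≤ (QC.Rq (QC.composeAndOr f m) : ℝ) ∧
      c * ((m : ℝ) ^ 2 * (QC.R0q f : ℝ)) ≤ (QC.R0q (QC.composeAndOr f m) : ℝ) := by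
  refine ⟨1 / 144 ^ 2, by norm_num, fun n m f => ?_⟩
  have hR := QC.card_mul_Rq_le (QC.composeOr_plant (m := m) f)
  have hR0 := QC.card_mul_R0q_le (QC.composeOr_plant (m := m) f)
  have hA := QC.card_mul_Rq_le (QC.composeAnd_plant (m := m) f)
  have hA0 := QC.card_mul_R0q_le (QC.composeAnd_plant (m := m) f)
  have hAO := QC.card_mul_Rq_le (QC.composeAndOr_plant (m := m) f)
  have hAO0 := QC.card_mul_R0q_le (QC.composeAndOr_plant (m := m) f)
  rw [Fintype.card_fin] at hR hR0 hA hA0 hAO hAO0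
  have square {r s t : ℕ} (h₁ : m * r ≤ 144 * s) (h₂ : m * s ≤ 144 * t) :
      m ^ 2 * r ≤ 144 ^ 2 * t := by
    linarith [Nat.mul_le_mul_left m h₁]
  have scale {r s : ℕ} (h : r ≤ 144 ^ 2 * s) : (1 / 144 ^ 2 : ℝ) * r ≤ s := by
    rw [one_div_mul_eq_div, div_le_iff₀' (by norm_num)]
    exact_mod_cast h
  refine ⟨?_, ?_, ?_, ?_⟩
  · exact_mod_cast scale (hR.trans (by omega))
  · exact_mod_cast scale (hR0.trans (by omega))
  · exact_mod_cast scale (square hA hAO)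
  · exact_mod_cast scale (square hA0 hAO0)
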